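/- Let D ∈ (0, D_max), suppose the rate-distortion function R is differentiable at D, let Q* be a probability mass function on Â with R(P,Q*,D) = R(D), and let λ* < 0 satisfy λ*·D − Λ_{P,Q*}(λ*) = (ln 2)·R(D). Then λ* = (ln 2)·R'(D). -/

import Mathlib

open Real MeasureTheory Finset
open scoped Classical

/-- `Q` is a probability mass function on `Fin k`. -/
def IsPmf {k : ℕ} (Q : Fin k → ℝ) : Prop := (∀ j, 0 ≤ Q j) ∧ ∑ j, Q j = 1

/-- `Λ_{P,Q}(λ) = E_P[ln Σ_j Q_j e^{λ ρ(X,a_j)}]`. -/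
noncomputable def Lam {k : ℕ} (P : Measure ℝ) (ρ : ℝ → Fin k → ℝ)
    (Q : Fin k → ℝ) (l : ℝ) : ℝ :=
  ∫ x, Real.log (∑ j, Q j * Real.exp (l * ρ x j)) ∂P

/-- The cost `∫ Σ_j W(x)({a_j}) log₂ (W(x)({a_j}) / Q_j) dP(x)` of a Markov kernel,
with the conventions `0 · log 0 = 0` (automatic in Lean) and value `⊤` if on a set of
positive `P`-measure `w x j > 0` for some `j` with `Q j = 0`. -/
noncomputable def wCost {k : ℕ} (P : Measure ℝ) (Q : Fin k → ℝ)
    (w : ℝ → Fin k → ℝ) : EReal :=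
  if ∀ᵐ x ∂P, ∀ j, 0 < w x j → 0 < Q j then
    ((∫ x, ∑ j, w x j * Real.logb 2 (w x j / Q j) ∂P : ℝ) : EReal)
  else ⊤

/-- `R(P,Q,D)`: infimum over Markov kernels `w` from `ℝ` to `Fin k` with
`∫ Σ_j w x j ρ(x,a_j) dP ≤ D` of the relative-entropy cost. -/
noncomputable def RPQ {k : ℕ} (P : Measure ℝ) (ρ : ℝ → Fin k → ℝ)
    (Q : Fin k → ℝ) (D : ℝ) : EReal :=
  ⨅ w ∈ {w : ℝ → Fin k → ℝ | Measurable w ∧ (∀ x j, 0 ≤ w x j) ∧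
      (∀ x, ∑ j, w x j = 1) ∧ ∫ x, ∑ j, w x j * ρ x j ∂P ≤ D}, wCost P Q w

/-- The rate-distortion function `R(D) = inf_Q R(P,Q,D)`. -/
noncomputable def RofD {k : ℕ} (P : Measure ℝ) (ρ : ℝ → Fin k → ℝ) (D : ℝ) : EReal :=
  ⨅ Q ∈ {Q : Fin k → ℝ | IsPmf Q}, RPQ P ρ Q D

/-- `D_max = min_j E_P[ρ(X,a_j)]`. -/
noncomputable def Dmax {k : ℕ} (P : Measure ℝ) (ρ : ℝ → Fin k → ℝ) : ℝ :=
  sInf (Set.range fun j => ∫ x, ρ x j ∂P)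

/-- `D_min^{P,Q} = E_P[min_{a ∈ supp Q} ρ(X,a)]`. -/
noncomputable def DminPQ {k : ℕ} (P : Measure ℝ) (ρ : ℝ → Fin k → ℝ)
    (Q : Fin k → ℝ) : ℝ :=
  ∫ x, (⨅ j : {j : Fin k // 0 < Q j}, ρ x (j : Fin k)) ∂P

/-- `D_max^{P,Q} = Σ_j Q_j · E_P[ρ(X,a_j)]`. -/
noncomputable def DmaxPQ {k : ℕ} (P : Measure ℝ) (ρ : ℝ → Fin k → ℝ)
    (Q : Fin k → ℝ) : ℝ :=
  ∑ j, Q j * ∫ x, ρ x j ∂P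

/-- The Fenchel–Legendre transform `Λ*_{P,Q}(D) = sup_{λ ≤ 0} [λ·D − Λ_{P,Q}(λ)]`. -/
noncomputable def LamStar {k : ℕ} (P : Measure ℝ) (ρ : ℝ → Fin k → ℝ)
    (Q : Fin k → ℝ) (D : ℝ) : EReal :=
  ⨆ l ∈ Set.Iic (0 : ℝ), ((l * D - Lam P ρ Q l : ℝ) : EReal)

/-!
Write `m t` for the expected distortion of the Gibbs kernel `W_t(x)(j) ∝ Q*_j e^{t ρ(x, a_j)}`.
Then `Λ' = m`, and `m' = V` is the expected variance of the distortion under `W_t`. The Gibbs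
variational principle gives `t D - Λ(t) ≤ ln 2 · R(P, Q*, D)` for `t ≤ 0`, with equality at
`λ*`; being an interior maximum, `λ*` satisfies `m(λ*) = D`. The kernel `W_t` also shows
`ln 2 · R(m t) ≤ t m(t) - Λ(t)`, again with equality at `t = λ*`. Differentiating the difference at
its minimum `λ*` yields `(λ* - ln 2 · R'(D)) V(λ*) = 0`, and `V(λ*) ≠ 0`: otherwise
`ρ(X, a_j) = E_{W_{λ*}}[ρ | X]` almost surely for any `j` charged by `Q*`, so that `D ≥ D_max`.
-/

section Calculus

variable {α E F : Type*} [MeasurableSpace α] {μ : Measure α} [IsFiniteMeasure μ]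
  [NormedAddCommGroup E] [ProperSpace E] [NormedAddCommGroup F] {g : α → E} {C : ℝ}

lemma pi_norm_le_of_nonneg_of_le {ι : Type*} [Fintype ι] [Nonempty ι] {r : ι → ℝ} {M : ℝ}
    (hr : 0 ≤ r) (hM : ∀ j, r j ≤ M) : ‖r‖ ≤ M :=
  (pi_norm_le_iff_of_nonempty r).2 fun j => (Real.norm_of_nonneg (hr j)).trans_le (hM j)

lemma integrable_comp_of_continuous_of_ae_norm_le {f : E → F} (hf : Continuous f)
    (hg : AEStronglyMeasurable g μ) (hC : ∀ᵐ x ∂μ, ‖g x‖ ≤ C) :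
    Integrable (fun x => f (g x)) μ := by
  obtain ⟨B, hB⟩ := (isCompact_closedBall (0 : E) C).exists_bound_of_continuousOn hf.continuousOn
  exact Integrable.of_bound (hf.comp_aestronglyMeasurable hg) B
    (hC.mono fun x hx => hB _ (mem_closedBall_zero_iff.2 hx))

lemma hasDerivAt_integral_comp_of_ae_norm_le [NormedSpace ℝ F] {f f' : ℝ → E → F}
    (hf : ∀ t, Continuous (f t)) (hf' : Continuous f'.uncurry)
    (hderiv : ∀ t y, HasDerivAt (f · y) (f' t y) t)
    (hg : AEStronglyMeasurable g μ) (hC : ∀ᵐ x ∂μ, ‖g x‖ ≤ C) (t₀ : ℝ) :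
    HasDerivAt (fun t => ∫ x, f t (g x) ∂μ) (∫ x, f' t₀ (g x) ∂μ) t₀ := by
  have hcompact : IsCompact (Metric.closedBall t₀ 1 ×ˢ Metric.closedBall (0 : E) C) :=
    (isCompact_closedBall _ _).prod (isCompact_closedBall _ _)
  obtain ⟨B, hB⟩ := hcompact.exists_bound_of_continuousOn hf'.continuousOn
  refine (hasDerivAt_integral_of_dominated_loc_of_deriv_le (F := fun t x => f t (g x))
    (F' := fun t x => f' t (g x)) (bound := fun _ => B)
    (Metric.closedBall_mem_nhds t₀ one_pos)
    (.of_forall fun t => (hf t).comp_aestronglyMeasurable hg)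
    (integrable_comp_of_continuous_of_ae_norm_le (hf t₀) hg hC)
    ((hf'.uncurry_left t₀).comp_aestronglyMeasurable hg) ?_ (integrable_const B)
    (ae_of_all _ fun x t _ => hderiv t (g x))).2
  filter_upwards [hC] with x hx t ht using hB (t, g x) ⟨ht, mem_closedBall_zero_iff.2 hx⟩

lemma deriv_eq_of_eventually_comp_le_mul_sub {φ m Λ : ℝ → ℝ} {l v : ℝ}
    (hφ : DifferentiableAt ℝ φ (m l)) (hm : HasDerivAt m v l) (hΛ : HasDerivAt Λ (m l) l)
    (hv : v ≠ 0) (hle : ∀ᶠ t in nhds l, φ (m t) ≤ t * m t - Λ t)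
    (heq : φ (m l) = l * m l - Λ l) : deriv φ (m l) = l := by
  have hmin : IsLocalMin (fun t => t * m t - Λ t - φ (m t)) l := by
    filter_upwards [hle] with t ht
    linarith
  have hderiv := (((hasDerivAt_id l).mul hm).sub hΛ).sub (hφ.hasDerivAt.comp l hm)
  have hzero := hmin.hasDerivAt_eq_zero hderiv
  have : (l - deriv φ (m l)) * v = 0 := by
    rw [← hzero]
    simp only [id_eq]
    ring
  rcases mul_eq_zero.1 this with h | h
  · linarith
  · exact absurd h hv

end Calculus

section Gibbs

variable {ι : Type*} [Fintype ι]

/-- The partition function `∑ j, Q j * exp (t * r j)` of the weights `Q` and the energy `r`. -/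
noncomputable def partitionFn (Q r : ι → ℝ) (t : ℝ) : ℝ := ∑ j, Q j * Real.exp (t * r j)

/-- The Gibbs distribution: `Q` tilted by `exp (t * r)` and normalized. For `r = ρ x` it is the
optimal test channel at `x` for the reproduction distribution `Q`. -/
noncomputable def gibbs (Q r : ι → ℝ) (t : ℝ) (j : ι) : ℝ :=
  Q j * Real.exp (t * r j) / partitionFn Q r t

/-- The mean of `r` under the Gibbs distribution. -/
noncomputable def gibbsMean (Q r : ι → ℝ) (t : ℝ) : ℝ := ∑ j, gibbs Q r t j * r j

/-- The variance of `r` under the Gibbs distribution. -/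
noncomputable def gibbsVar (Q r : ι → ℝ) (t : ℝ) : ℝ :=
  ∑ j, gibbs Q r t j * (r j - gibbsMean Q r t) ^ 2

/-- The relative entropy, in nats, of the weights `p` with respect to `q`. It is the usual one only
when `p` vanishes where `q` does: the terms with `q j = 0` are `0` here rather than `∞`. -/
noncomputable def relEntropy (p q : ι → ℝ) : ℝ := ∑ j, p j * Real.log (p j / q j)

variable {Q : ι → ℝ}

lemma partitionFn_pos (hQ : 0 < Q) (r : ι → ℝ) (t : ℝ) : 0 < partitionFn Q r t := by
  obtain ⟨hnonneg, j, hj⟩ := Pi.lt_def.1 hQ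
  exact Finset.sum_pos' (fun i _ => mul_nonneg (hnonneg i) (Real.exp_pos _).le)
    ⟨j, Finset.mem_univ j, mul_pos hj (Real.exp_pos _)⟩

lemma gibbs_nonneg (hQ : 0 < Q) (r : ι → ℝ) (t : ℝ) (j : ι) : 0 ≤ gibbs Q r t j :=
  div_nonneg (mul_nonneg (hQ.le j) (Real.exp_pos _).le) (partitionFn_pos hQ r t).le

lemma gibbs_pos_iff (hQ : 0 < Q) (r : ι → ℝ) (t : ℝ) (j : ι) : 0 < gibbs Q r t j ↔ 0 < Q j := by
  rw [gibbs, div_pos_iff_of_pos_right (partitionFn_pos hQ r t),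
    mul_pos_iff_of_pos_right (Real.exp_pos _)]

lemma sum_gibbs (hQ : 0 < Q) (r : ι → ℝ) (t : ℝ) : ∑ j, gibbs Q r t j = 1 := by
  simp only [gibbs, ← Finset.sum_div]
  exact div_self (partitionFn_pos hQ r t).ne'

lemma gibbs_mem_stdSimplex (hQ : 0 < Q) (r : ι → ℝ) (t : ℝ) : gibbs Q r t ∈ stdSimplex ℝ ι :=
  ⟨gibbs_nonneg hQ r t, sum_gibbs hQ r t⟩

lemma gibbsVar_nonneg (hQ : 0 < Q) (r : ι → ℝ) (t : ℝ) : 0 ≤ gibbsVar Q r t :=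
  Finset.sum_nonneg fun j _ => mul_nonneg (gibbs_nonneg hQ r t j) (sq_nonneg _)

lemma eq_gibbsMean_of_gibbsVar_eq_zero (hQ : 0 < Q) {r : ι → ℝ} {t : ℝ} (h : gibbsVar Q r t = 0)
    {j : ι} (hj : 0 < Q j) : r j = gibbsMean Q r t := by
  have hterm := (Finset.sum_eq_zero_iff_of_nonneg fun i _ =>
    mul_nonneg (gibbs_nonneg hQ r t i) (sq_nonneg _)).1 h j (Finset.mem_univ j)
  have hsq := (mul_eq_zero.1 hterm).resolve_left ((gibbs_pos_iff hQ r t j).2 hj).ne'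
  exact sub_eq_zero.1 (pow_eq_zero_iff two_ne_zero |>.1 hsq)

lemma hasDerivAt_const_mul_exp_mul_const (a b t : ℝ) :
    HasDerivAt (fun s => a * Real.exp (s * b)) (a * (Real.exp (t * b) * b)) t :=
  ((hasDerivAt_mul_const b).exp).const_mul a

lemma hasDerivAt_partitionFn (hQ : 0 < Q) (r : ι → ℝ) (t : ℝ) :
    HasDerivAt (partitionFn Q r) (partitionFn Q r t * gibbsMean Q r t) t := by
  refine (HasDerivAt.fun_sum fun j (_ : j ∈ Finset.univ) =>
    hasDerivAt_const_mul_exp_mul_const (Q j) (r j) t).congr_deriv ?_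
  rw [gibbsMean, Finset.mul_sum]
  refine Finset.sum_congr rfl fun j _ => ?_
  have := (partitionFn_pos hQ r t).ne'
  rw [gibbs]
  field_simp

lemma hasDerivAt_log_partitionFn (hQ : 0 < Q) (r : ι → ℝ) (t : ℝ) :
    HasDerivAt (fun s => Real.log (partitionFn Q r s)) (gibbsMean Q r t) t := by
  have hpos := (partitionFn_pos hQ r t).ne'
  simpa only [mul_div_cancel_left₀ _ hpos] using (hasDerivAt_partitionFn hQ r t).log hpos

lemma hasDerivAt_gibbs (hQ : 0 < Q) (r : ι → ℝ) (t : ℝ) (j : ι) :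
    HasDerivAt (fun s => gibbs Q r s j) (gibbs Q r t j * (r j - gibbsMean Q r t)) t := by
  have hpos := (partitionFn_pos hQ r t).ne'
  refine ((hasDerivAt_const_mul_exp_mul_const (Q j) (r j) t).fun_div
    (hasDerivAt_partitionFn hQ r t) hpos).congr_deriv ?_
  rw [gibbs]
  field_simp

lemma gibbsVar_eq_sum (hQ : 0 < Q) (r : ι → ℝ) (t : ℝ) :
    gibbsVar Q r t = ∑ j, gibbs Q r t j * (r j - gibbsMean Q r t) * r j := by
  have hcentered : ∑ j, gibbs Q r t j * (r j - gibbsMean Q r t) = 0 := by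
    simp only [mul_sub, Finset.sum_sub_distrib, ← Finset.sum_mul, sum_gibbs hQ, one_mul]
    exact sub_self _
  calc gibbsVar Q r t
      = ∑ j, (gibbs Q r t j * (r j - gibbsMean Q r t) * r j -
          gibbs Q r t j * (r j - gibbsMean Q r t) * gibbsMean Q r t) :=
        Finset.sum_congr rfl fun j _ => by ring
    _ = _ := by rw [Finset.sum_sub_distrib, ← Finset.sum_mul, hcentered, zero_mul, sub_zero]

lemma hasDerivAt_gibbsMean (hQ : 0 < Q) (r : ι → ℝ) (t : ℝ) :
    HasDerivAt (gibbsMean Q r) (gibbsVar Q r t) t := by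
  rw [gibbsVar_eq_sum hQ]
  exact HasDerivAt.fun_sum fun j _ => (hasDerivAt_gibbs hQ r t j).mul_const (r j)

lemma continuous_partitionFn (Q : ι → ℝ) :
    Continuous fun p : ℝ × (ι → ℝ) => partitionFn Q p.2 p.1 := by
  unfold partitionFn
  fun_prop

lemma continuous_log_partitionFn (hQ : 0 < Q) :
    Continuous fun p : ℝ × (ι → ℝ) => Real.log (partitionFn Q p.2 p.1) :=
  (continuous_partitionFn Q).log fun p => (partitionFn_pos hQ p.2 p.1).ne'

lemma continuous_gibbs (hQ : 0 < Q) : Continuous fun p : ℝ × (ι → ℝ) => gibbs Q p.2 p.1 :=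
  continuous_pi fun j => Continuous.div (by fun_prop) (continuous_partitionFn Q)
    fun p => (partitionFn_pos hQ p.2 p.1).ne'

lemma continuous_gibbsMean (hQ : 0 < Q) :
    Continuous fun p : ℝ × (ι → ℝ) => gibbsMean Q p.2 p.1 := by
  have := continuous_gibbs hQ
  unfold gibbsMean
  fun_prop

lemma continuous_gibbsVar (hQ : 0 < Q) :
    Continuous fun p : ℝ × (ι → ℝ) => gibbsVar Q p.2 p.1 := by
  have := continuous_gibbs hQ
  have := continuous_gibbsMean hQ
  unfold gibbsVar
  fun_prop

lemma continuous_relEntropy_left (q : ι → ℝ) : Continuous fun p => relEntropy p q := by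
  refine continuous_finsetSum _ fun j _ => ?_
  rcases eq_or_ne (q j) 0 with hq | hq
  · simpa only [hq, div_zero, Real.log_zero, mul_zero] using continuous_const
  · have hscale (p : ι → ℝ) :
        p j * Real.log (p j / q j) = q j * (p j / q j * Real.log (p j / q j)) := by
      field_simp
    simp only [hscale]
    exact continuous_const.mul
      (Real.continuous_mul_log.comp ((continuous_apply j).div_const _))

lemma relEntropy_nonneg {p q : ι → ℝ} (hp : 0 ≤ p) (hq : 0 ≤ q)
    (hac : ∀ j, 0 < p j → 0 < q j) (hsum : ∑ j, q j ≤ ∑ j, p j) : 0 ≤ relEntropy p q := by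
  have hterm (j : ι) : p j - q j ≤ p j * Real.log (p j / q j) := by
    rcases (hp j).eq_or_lt with hpj | hpj
    · simpa [← hpj] using hq j
    · have hqj := hac j hpj
      have hkl := mul_nonneg (hq j)
        (InformationTheory.klFun_nonneg (div_nonneg (hp j) (hq j)))
      have : q j * InformationTheory.klFun (p j / q j) =
          p j * Real.log (p j / q j) + q j - p j := by
        rw [InformationTheory.klFun_apply]
        field_simp
      linarith
  calc 0 ≤ ∑ j, (p j - q j) := by rw [Finset.sum_sub_distrib]; linarith
    _ ≤ relEntropy p q := Finset.sum_le_sum fun j _ => hterm j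

lemma relEntropy_eq_add_relEntropy_gibbs (hQ : 0 < Q) {w : ι → ℝ} (hw : w ∈ stdSimplex ℝ ι)
    (hac : ∀ j, 0 < w j → 0 < Q j) (r : ι → ℝ) (t : ℝ) :
    relEntropy w Q = t * ∑ j, w j * r j - Real.log (partitionFn Q r t) +
      relEntropy w (gibbs Q r t) := by
  have hZ := partitionFn_pos hQ r t
  have hterm (j : ι) : w j * Real.log (w j / Q j) = t * (w j * r j) -
      w j * Real.log (partitionFn Q r t) + w j * Real.log (w j / gibbs Q r t j) := by
    rcases (hw.1 j).eq_or_lt with hwj | hwj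
    · simp only [← hwj, zero_mul, mul_zero, sub_zero, add_zero]
    · have hQj := hac j hwj
      have hlog : Real.log (gibbs Q r t j) =
          Real.log (Q j) + t * r j - Real.log (partitionFn Q r t) := by
        rw [gibbs, Real.log_div (by positivity) hZ.ne',
          Real.log_mul hQj.ne' (Real.exp_pos _).ne', Real.log_exp]
      rw [Real.log_div hwj.ne' hQj.ne',
        Real.log_div hwj.ne' ((gibbs_pos_iff hQ r t j).2 hQj).ne', hlog]
      ring
  simp only [relEntropy, hterm, Finset.sum_add_distrib, Finset.sum_sub_distrib, ← Finset.sum_mul,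
    hw.2, one_mul, Finset.mul_sum]

lemma mul_sum_sub_log_partitionFn_le_relEntropy (hQ : 0 < Q) {w : ι → ℝ}
    (hw : w ∈ stdSimplex ℝ ι) (hac : ∀ j, 0 < w j → 0 < Q j) (r : ι → ℝ) (t : ℝ) :
    t * ∑ j, w j * r j - Real.log (partitionFn Q r t) ≤ relEntropy w Q := by
  have hnonneg : 0 ≤ relEntropy w (gibbs Q r t) :=
    relEntropy_nonneg hw.1 (gibbs_nonneg hQ r t)
      (fun j hj => (gibbs_pos_iff hQ r t j).2 (hac j hj)) (by rw [sum_gibbs hQ, hw.2])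
  linarith [relEntropy_eq_add_relEntropy_gibbs hQ hw hac r t]

lemma relEntropy_gibbs (hQ : 0 < Q) (r : ι → ℝ) (t : ℝ) :
    relEntropy (gibbs Q r t) Q = t * gibbsMean Q r t - Real.log (partitionFn Q r t) := by
  have hself : relEntropy (gibbs Q r t) (gibbs Q r t) = 0 :=
    Finset.sum_eq_zero fun j _ => by
      rcases eq_or_ne (gibbs Q r t j) 0 with h | h
      · rw [h, zero_mul]
      · rw [div_self h, Real.log_one, mul_zero]
  rw [relEntropy_eq_add_relEntropy_gibbs hQ (gibbs_mem_stdSimplex hQ r t)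
    (fun j => (gibbs_pos_iff hQ r t j).1) r t, hself, add_zero, gibbsMean]

end Gibbs

section RateDistortion

variable {k : ℕ} {P : Measure ℝ} {M : ℝ} {ρ : ℝ → Fin k → ℝ} {Q : Fin k → ℝ}

/-- The expected distortion of the Gibbs kernel `x ↦ gibbs Q (ρ x) t`. -/
noncomputable def meanDistortion (P : Measure ℝ) (ρ : ℝ → Fin k → ℝ) (Q : Fin k → ℝ)
    (t : ℝ) : ℝ :=
  ∫ x, gibbsMean Q (ρ x) t ∂P

lemma exists_pos_of_isPmf (hQ : IsPmf Q) : ∃ j, 0 < Q j := by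
  by_contra! h
  linarith [hQ.2, Finset.sum_nonpos fun j (_ : j ∈ Finset.univ) => h j]

lemma pos_of_isPmf (hQ : IsPmf Q) : 0 < Q :=
  Pi.lt_def.2 ⟨hQ.1, exists_pos_of_isPmf hQ⟩

lemma log_two_mul_wCost {w : ℝ → Fin k → ℝ} (hac : ∀ᵐ x ∂P, ∀ j, 0 < w x j → 0 < Q j) :
    (Real.log 2 : EReal) * wCost P Q w = (∫ x, relEntropy (w x) Q ∂P : ℝ) := by
  rw [wCost, if_pos hac, ← EReal.coe_mul, ← integral_const_mul]
  have hlog : Real.log 2 ≠ 0 := (Real.log_pos one_lt_two).ne'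
  congr 2 with x
  rw [relEntropy, Finset.mul_sum]
  refine Finset.sum_congr rfl fun j _ => ?_
  rw [Real.logb]
  field_simp

lemma Dmax_le_integral (j : Fin k) : Dmax P ρ ≤ ∫ x, ρ x j ∂P :=
  csInf_le (Set.finite_range _).bddBelow ⟨j, rfl⟩

variable [IsFiniteMeasure P]

lemma integrable_log_partitionFn (hρ : AEStronglyMeasurable ρ P) (hρM : ∀ᵐ x ∂P, ‖ρ x‖ ≤ M)
    (hQ : 0 < Q) (t : ℝ) : Integrable (fun x => Real.log (partitionFn Q (ρ x) t)) P :=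
  integrable_comp_of_continuous_of_ae_norm_le (f := fun r => Real.log (partitionFn Q r t))
    ((continuous_log_partitionFn hQ).comp (Continuous.prodMk_right t)) hρ hρM

lemma hasDerivAt_Lam (hρ : AEStronglyMeasurable ρ P) (hρM : ∀ᵐ x ∂P, ‖ρ x‖ ≤ M) (hQ : 0 < Q)
    (t : ℝ) : HasDerivAt (Lam P ρ Q) (meanDistortion P ρ Q t) t :=
  hasDerivAt_integral_comp_of_ae_norm_le
    (fun s => (continuous_log_partitionFn hQ).comp (Continuous.prodMk_right s))
    (f' := fun s r => gibbsMean Q r s) (continuous_gibbsMean hQ)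
    (fun s r => hasDerivAt_log_partitionFn hQ r s) hρ hρM t

lemma hasDerivAt_meanDistortion (hρ : AEStronglyMeasurable ρ P) (hρM : ∀ᵐ x ∂P, ‖ρ x‖ ≤ M)
    (hQ : 0 < Q) (t : ℝ) :
    HasDerivAt (meanDistortion P ρ Q) (∫ x, gibbsVar Q (ρ x) t ∂P) t :=
  hasDerivAt_integral_comp_of_ae_norm_le
    (fun s => (continuous_gibbsMean hQ).comp (Continuous.prodMk_right s))
    (f' := fun s r => gibbsVar Q r s) (continuous_gibbsVar hQ)
    (fun s r => hasDerivAt_gibbsMean hQ r s) hρ hρM t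

lemma integral_eq_meanDistortion_of_integral_gibbsVar_eq_zero (hρ : AEStronglyMeasurable ρ P)
    (hρM : ∀ᵐ x ∂P, ‖ρ x‖ ≤ M) (hQ : 0 < Q) {t : ℝ}
    (h : ∫ x, gibbsVar Q (ρ x) t ∂P = 0) {j : Fin k} (hj : 0 < Q j) :
    ∫ x, ρ x j ∂P = meanDistortion P ρ Q t := by
  have hint := integrable_comp_of_continuous_of_ae_norm_le (f := fun r => gibbsVar Q r t)
    ((continuous_gibbsVar hQ).comp (Continuous.prodMk_right t)) hρ hρM
  have hzero := (integral_eq_zero_iff_of_nonneg (fun x => gibbsVar_nonneg hQ (ρ x) t) hint).1 h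
  exact integral_congr_ae (hzero.mono fun x hx => eq_gibbsMean_of_gibbsVar_eq_zero hQ hx hj)

lemma integral_gibbsVar_ne_zero (hρ : AEStronglyMeasurable ρ P) (hρM : ∀ᵐ x ∂P, ‖ρ x‖ ≤ M)
    (hQ : IsPmf Q) {t : ℝ} (h : meanDistortion P ρ Q t < Dmax P ρ) :
    ∫ x, gibbsVar Q (ρ x) t ∂P ≠ 0 := fun hzero => by
  obtain ⟨j, hj⟩ := exists_pos_of_isPmf hQ
  have hmean := integral_eq_meanDistortion_of_integral_gibbsVar_eq_zero hρ hρM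
    (pos_of_isPmf hQ) hzero hj
  linarith [Dmax_le_integral (P := P) (ρ := ρ) j]

lemma mul_sub_Lam_le_integral_relEntropy (hρ : Measurable ρ) (hρM : ∀ᵐ x ∂P, ‖ρ x‖ ≤ M)
    (hQ : 0 < Q) {w : ℝ → Fin k → ℝ} (hw : Measurable w) (hw' : ∀ x, w x ∈ stdSimplex ℝ (Fin k))
    (hac : ∀ᵐ x ∂P, ∀ j, 0 < w x j → 0 < Q j) (t : ℝ) :
    t * ∫ x, ∑ j, w x j * ρ x j ∂P - Lam P ρ Q t ≤ ∫ x, relEntropy (w x) Q ∂P := by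
  have hw_norm (x : ℝ) : ‖w x‖ ≤ 1 :=
    mem_closedBall_zero_iff.1 (stdSimplex_subset_closedBall (hw' x))
  have hdist : Integrable (fun x => ∑ j, w x j * ρ x j) P :=
    integrable_comp_of_continuous_of_ae_norm_le (g := fun x => (w x, ρ x))
      (f := fun p : (Fin k → ℝ) × (Fin k → ℝ) => ∑ j, p.1 j * p.2 j) (by fun_prop)
      (hw.prodMk hρ).aestronglyMeasurable
      (hρM.mono fun x hx => norm_prod_le_iff.2
        ⟨(hw_norm x).trans (le_max_left 1 M), hx.trans (le_max_right 1 M)⟩)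
  have hlog := integrable_log_partitionFn hρ.aestronglyMeasurable hρM hQ t
  have hent : Integrable (fun x => relEntropy (w x) Q) P :=
    integrable_comp_of_continuous_of_ae_norm_le (f := fun p => relEntropy p Q)
      (continuous_relEntropy_left Q) hw.aestronglyMeasurable (ae_of_all _ hw_norm)
  calc t * ∫ x, ∑ j, w x j * ρ x j ∂P - Lam P ρ Q t
      = ∫ x, (t * ∑ j, w x j * ρ x j - Real.log (partitionFn Q (ρ x) t)) ∂P := by
        rw [integral_sub (hdist.const_mul t) hlog, integral_const_mul]
        rfl
    _ ≤ ∫ x, relEntropy (w x) Q ∂P :=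
        integral_mono_ae ((hdist.const_mul t).sub hlog) hent (hac.mono fun x hx =>
          mul_sum_sub_log_partitionFn_le_relEntropy hQ (hw' x) hx (ρ x) t)

lemma mul_sub_Lam_le_log_two_mul_RPQ (hρ : Measurable ρ) (hρM : ∀ᵐ x ∂P, ‖ρ x‖ ≤ M)
    (hQ : 0 < Q) {t : ℝ} (ht : t ≤ 0) (D : ℝ) :
    ((t * D - Lam P ρ Q t : ℝ) : EReal) ≤ (Real.log 2 : EReal) * RPQ P ρ Q D := by
  have hlog : (0 : EReal) < Real.log 2 := EReal.coe_pos.2 (Real.log_pos one_lt_two)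
  rw [← EReal.div_le_iff_le_mul hlog (EReal.coe_ne_top _)]
  refine le_iInf₂ fun w ⟨hw, hw_nonneg, hw_sum, hwD⟩ => ?_
  rw [EReal.div_le_iff_le_mul hlog (EReal.coe_ne_top _)]
  by_cases hac : ∀ᵐ x ∂P, ∀ j, 0 < w x j → 0 < Q j
  · rw [log_two_mul_wCost hac, EReal.coe_le_coe_iff]
    exact (sub_le_sub_right (mul_le_mul_of_nonpos_left hwD ht) _).trans
      (mul_sub_Lam_le_integral_relEntropy hρ hρM hQ hw (fun x => ⟨hw_nonneg x, hw_sum x⟩) hac t)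
  · rw [wCost, if_neg hac, EReal.mul_top_of_pos hlog]
    exact le_top

lemma log_two_mul_RPQ_meanDistortion_le (hρ : Measurable ρ) (hρM : ∀ᵐ x ∂P, ‖ρ x‖ ≤ M)
    (hQ : 0 < Q) (t : ℝ) :
    (Real.log 2 : EReal) * RPQ P ρ Q (meanDistortion P ρ Q t) ≤
      ((t * meanDistortion P ρ Q t - Lam P ρ Q t : ℝ) : EReal) := by
  have hlog : (0 : EReal) ≤ Real.log 2 := EReal.coe_nonneg.2 (Real.log_nonneg one_le_two)
  have hmeas : Measurable fun x => gibbs Q (ρ x) t :=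
    ((continuous_gibbs hQ).comp (Continuous.prodMk_right t)).measurable.comp hρ
  have hle : RPQ P ρ Q (meanDistortion P ρ Q t) ≤ wCost P Q fun x => gibbs Q (ρ x) t :=
    iInf₂_le _ ⟨hmeas, fun x => gibbs_nonneg hQ (ρ x) t, fun x => sum_gibbs hQ (ρ x) t, le_rfl⟩
  have hmean := integrable_comp_of_continuous_of_ae_norm_le (f := fun r => gibbsMean Q r t)
    ((continuous_gibbsMean hQ).comp (Continuous.prodMk_right t)) hρ.aestronglyMeasurable hρM
  have hlogZ := integrable_log_partitionFn hρ.aestronglyMeasurable hρM hQ t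
  refine (mul_le_mul_of_nonneg_left hle hlog).trans_eq ?_
  rw [log_two_mul_wCost (ae_of_all _ fun x j => (gibbs_pos_iff hQ (ρ x) t j).1)]
  simp only [relEntropy_gibbs hQ]
  rw [integral_sub (hmean.const_mul t) hlogZ, integral_const_mul]
  rfl

lemma RofD_nonneg (hρ : Measurable ρ) (hρM : ∀ᵐ x ∂P, ‖ρ x‖ ≤ M) (D : ℝ) :
    0 ≤ RofD P ρ D := by
  refine le_iInf₂ fun Q hQ => ?_
  have hLam : Lam P ρ Q 0 = 0 := by simp [Lam, hQ.2]
  have hdual := mul_sub_Lam_le_log_two_mul_RPQ hρ hρM (pos_of_isPmf hQ) le_rfl D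
  rw [hLam, zero_mul, sub_zero, EReal.coe_zero, ← EReal.div_le_iff_le_mul
    (EReal.coe_pos.2 (Real.log_pos one_lt_two)) (EReal.coe_ne_top _), EReal.zero_div] at hdual
  exact hdual

lemma log_two_mul_toReal_RofD_meanDistortion_le (hρ : Measurable ρ)
    (hρM : ∀ᵐ x ∂P, ‖ρ x‖ ≤ M) (hQ : IsPmf Q) (t : ℝ) :
    Real.log 2 * (RofD P ρ (meanDistortion P ρ Q t)).toReal ≤
      t * meanDistortion P ρ Q t - Lam P ρ Q t := by
  have hlog : (0 : EReal) ≤ Real.log 2 := EReal.coe_nonneg.2 (Real.log_nonneg one_le_two)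
  have hRofD : RofD P ρ (meanDistortion P ρ Q t) ≤ RPQ P ρ Q (meanDistortion P ρ Q t) :=
    iInf₂_le Q hQ
  have hle := (mul_le_mul_of_nonneg_left hRofD hlog).trans
    (log_two_mul_RPQ_meanDistortion_le hρ hρM (pos_of_isPmf hQ) t)
  have hnonneg := mul_nonneg hlog (RofD_nonneg hρ hρM (meanDistortion P ρ Q t))
  simpa only [EReal.toReal_mul, EReal.toReal_coe] using
    EReal.toReal_le_toReal hle (EReal.bot_lt_zero.trans_le hnonneg).ne' (EReal.coe_ne_top _)

lemma meanDistortion_eq_of_mul_sub_Lam_eq (hρ : Measurable ρ) (hρM : ∀ᵐ x ∂P, ‖ρ x‖ ≤ M)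
    (hQ : 0 < Q) {l : ℝ} (hl : l < 0) {D : ℝ}
    (heq : ((l * D - Lam P ρ Q l : ℝ) : EReal) = (Real.log 2 : EReal) * RPQ P ρ Q D) :
    meanDistortion P ρ Q l = D := by
  have hmax : IsLocalMax (fun t => t * D - Lam P ρ Q t) l := by
    filter_upwards [Iio_mem_nhds hl] with t ht
    exact EReal.coe_le_coe_iff.1
      ((mul_sub_Lam_le_log_two_mul_RPQ hρ hρM hQ (le_of_lt ht) D).trans_eq heq.symm)
  have hderiv := (hasDerivAt_mul_const (x := l) D).sub
    (hasDerivAt_Lam hρ.aestronglyMeasurable hρM hQ l)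
  linarith [hmax.hasDerivAt_eq_zero hderiv]

end RateDistortion

theorem stmt_16_general {k : ℕ} {P : Measure ℝ} [IsFiniteMeasure P] {M : ℝ}
    {ρ : ℝ → Fin k → ℝ} (hρ : Measurable ρ) (hρM : ∀ᵐ x ∂P, ‖ρ x‖ ≤ M)
    {D : ℝ} (hD : D < Dmax P ρ)
    (hdiff : DifferentiableAt ℝ (fun t => (RofD P ρ t).toReal) D)
    {Q : Fin k → ℝ} (hQ : IsPmf Q) (hQopt : RPQ P ρ Q D = RofD P ρ D) {l : ℝ} (hl : l < 0)
    (heq : ((l * D - Lam P ρ Q l : ℝ) : EReal) = (Real.log 2 : EReal) * RofD P ρ D) :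
    l = Real.log 2 * deriv (fun t => (RofD P ρ t).toReal) D := by
  have hQpos := pos_of_isPmf hQ
  have hρ' := hρ.aestronglyMeasurable (μ := P)
  obtain rfl : meanDistortion P ρ Q l = D :=
    meanDistortion_eq_of_mul_sub_Lam_eq hρ hρM hQpos hl (hQopt ▸ heq)
  have htouch := congrArg EReal.toReal heq
  rw [EReal.toReal_mul, EReal.toReal_coe, EReal.toReal_coe] at htouch
  rw [← deriv_const_mul _ hdiff]
  exact (deriv_eq_of_eventually_comp_le_mul_sub (hdiff.const_mul _)
    (hasDerivAt_meanDistortion hρ' hρM hQpos l) (hasDerivAt_Lam hρ' hρM hQpos l)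
    (integral_gibbsVar_ne_zero hρ' hρM hQ hD)
    (.of_forall (log_two_mul_toReal_RofD_meanDistortion_le hρ hρM hQ)) htouch.symm).symm

/-- **Lemma 2(ii).** If `R` is differentiable at `D ∈ (0, D_max)`, `Q*` achieves
`R(P,Q*,D) = R(D)`, and `λ* < 0` satisfies `λ*·D − Λ_{P,Q*}(λ*) = (ln 2)·R(D)`,
then `λ* = (ln 2)·R'(D)`. -/
theorem stmt_16 {k : ℕ} (hk : 0 < k) (A : Set ℝ) (hA : MeasurableSet A)
    (P : Measure ℝ) [IsProbabilityMeasure P] (hsupp : P Aᶜ = 0)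
    (M : ℝ) (ρ : ℝ → Fin k → ℝ) (hρmeas : ∀ j, Measurable fun x => ρ x j)
    (hρnn : ∀ x ∈ A, ∀ j, 0 ≤ ρ x j) (hρM : ∀ x ∈ A, ∀ j, ρ x j ≤ M)
    (hρmin : ∀ x ∈ A, ∃ j, ρ x j = 0)
    (hDmax : 0 < Dmax P ρ)
    (D : ℝ) (hD : D ∈ Set.Ioo 0 (Dmax P ρ))
    (hdiff : DifferentiableAt ℝ (fun t => (RofD P ρ t).toReal) D)
    (Q : Fin k → ℝ) (hQ : IsPmf Q) (hQopt : RPQ P ρ Q D = RofD P ρ D)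
    (l : ℝ) (hl : l < 0)
    (heq : ((l * D - Lam P ρ Q l : ℝ) : EReal) = (Real.log 2 : EReal) * RofD P ρ D) :
    l = Real.log 2 * deriv (fun t => (RofD P ρ t).toReal) D := by
  have : Nonempty (Fin k) := Fin.pos_iff_nonempty.1 hk
  exact stmt_16_general (measurable_pi_lambda ρ hρmeas)
    (Filter.mem_of_superset (mem_ae_iff.2 hsupp) fun x hx =>
      pi_norm_le_of_nonneg_of_le (hρnn x hx) (hρM x hx)) hD.2 hdiff hQ hQopt hl heq
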